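/- arXiv:math/0609603 — 2 statements merged into one kernel-verified Lean document; each statement's English description precedes it below -/
import Mathlib

section
/- For every real number a > 0, ∫₀^∞ ρ² e^{−aρ²} (∫_ρ^∞ e^{−η²} dη) dρ = π/(8 a^{3/2}) − 1/(4a(a+1)) − arctan(a^{−1/2})/(4 a^{3/2}). -/
open MeasureTheory Real

/-!
The substitution `η = ρ t` gives the inner integral the fixed domain `t > 1` and turns the integrand
into `ρ ^ 3 * exp (-(a + t ^ 2) * ρ ^ 2)`. This is nonnegative, so by Tonelli the `ρ`-integral can
be taken first; being an odd Gaussian moment it is elementary, and what remains is the integral of a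
rational function of `t`.
-/

section OddGaussianMoments

open scoped Nat

lemma integrableOn_pow_mul_exp_neg_mul_sq {c : ℝ} (hc : 0 < c) (n : ℕ) :
    IntegrableOn (fun x : ℝ => x ^ n * exp (-c * x ^ 2)) (Set.Ioi 0) := by
  have hn : (-1 : ℝ) < n := neg_one_lt_zero.trans_le n.cast_nonneg
  simpa only [rpow_natCast] using integrableOn_rpow_mul_exp_neg_mul_sq hc hn

lemma integral_pow_odd_mul_exp_neg_mul_sq {c : ℝ} (hc : 0 < c) (k : ℕ) :
    ∫ x in Set.Ioi (0 : ℝ), x ^ (2 * k + 1) * exp (-c * x ^ 2) = k ! / 2 * (c ^ (k + 1))⁻¹ := by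
  have hk : (-1 : ℝ) < (2 * k + 1 : ℕ) := neg_one_lt_zero.trans_le (Nat.cast_nonneg _)
  have half_exponent : (((2 * k + 1 : ℕ) : ℝ) + 1) / 2 = k + 1 := by push_cast; ring
  have moment := integral_rpow_mul_exp_neg_mul_rpow two_pos hk hc
  rw [neg_div, half_exponent, Gamma_nat_eq_factorial, rpow_neg hc.le, ← Nat.cast_add_one] at moment
  simp only [rpow_natCast, rpow_two] at moment
  rw [moment]
  ring

end OddGaussianMoments

section RationalIntegral

open Filter Topology

lemma integrable_inv_add_sq {a : ℝ} (ha : 0 < a) : Integrable fun t : ℝ => (a + t ^ 2)⁻¹ := by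
  refine ((integrable_inv_one_add_sq.comp_div (sqrt_pos.2 ha).ne').const_mul a⁻¹).congr
    (.of_forall fun t => ?_)
  dsimp only
  rw [← mul_inv, div_pow, sq_sqrt ha.le, mul_add, mul_one, mul_div_cancel₀ _ ha.ne']

lemma integrable_inv_add_sq_pow_succ {a : ℝ} (ha : 0 < a) (k : ℕ) :
    Integrable fun t : ℝ => ((a + t ^ 2) ^ (k + 1))⁻¹ := by
  have hpos (t : ℝ) : 0 < a + t ^ 2 := by positivity
  refine ((integrable_inv_add_sq ha).const_mul (a ^ k)⁻¹).mono' (by fun_prop)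
    (.of_forall fun t => ?_)
  rw [norm_of_nonneg (inv_pos.2 (pow_pos (hpos t) _)).le, ← mul_inv, pow_succ]
  gcongr
  exact le_add_of_nonneg_right (sq_nonneg t)

lemma tendsto_div_add_sq_atTop (c : ℝ) : Tendsto (fun t : ℝ => t / (c + t ^ 2)) atTop (𝓝 0) := by
  have hlim : Tendsto (fun t : ℝ => c * t⁻¹ + t) atTop atTop :=
    (tendsto_inv_atTop_zero.const_mul c).add_atTop tendsto_id
  refine hlim.inv_tendsto_atTop.congr' ?_
  filter_upwards [eventually_ne_atTop 0] with t ht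
  rw [Pi.inv_apply, ← inv_div]
  field_simp

lemma hasDerivAt_div_add_sq_add_arctan {s : ℝ} (hs : s ≠ 0) (t : ℝ) :
    HasDerivAt (fun t => t / (s ^ 2 + t ^ 2) / (2 * s ^ 2) + arctan (t / s) / (2 * s ^ 3))
      ((s ^ 2 + t ^ 2) ^ 2)⁻¹ t := by
  have hst : s ^ 2 + t ^ 2 ≠ 0 := by positivity
  have rational_part :=
    ((hasDerivAt_id t).div ((hasDerivAt_pow 2 t).const_add (s ^ 2)) hst).div_const (2 * s ^ 2)
  have arctan_part := ((hasDerivAt_id t).div_const s).arctan.div_const (2 * s ^ 3)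
  refine (rational_part.add arctan_part).congr_deriv ?_
  have arctan_denom : 1 + (t / s) ^ 2 = (s ^ 2 + t ^ 2) / s ^ 2 := by field_simp
  simp only [id, arctan_denom]
  field_simp
  ring

lemma integral_Ioi_inv_add_sq_sq {s : ℝ} (hs : 0 < s) (b : ℝ) :
    ∫ t in Set.Ioi b, ((s ^ 2 + t ^ 2) ^ 2)⁻¹ =
      π / (4 * s ^ 3) - b / (s ^ 2 + b ^ 2) / (2 * s ^ 2) - arctan (b / s) / (2 * s ^ 3) := by
  have arctan_lim : Tendsto (fun t => arctan (t / s)) atTop (𝓝 (π / 2)) :=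
    (tendsto_nhds_of_tendsto_nhdsWithin tendsto_arctan_atTop).comp (tendsto_id.atTop_div_const hs)
  have primitive_lim := ((tendsto_div_add_sq_atTop (s ^ 2)).div_const (2 * s ^ 2)).add
    (arctan_lim.div_const (2 * s ^ 3))
  rw [integral_Ioi_of_hasDerivAt_of_tendsto' (fun t _ => hasDerivAt_div_add_sq_add_arctan hs.ne' t)
    (integrable_inv_add_sq_pow_succ (sq_pos_of_pos hs) 1).integrableOn primitive_lim]
  ring

end RationalIntegral

section GaussianTail

open scoped Nat

lemma pow_mul_exp_mul_integral_Ioi_exp_neg_sq (a b : ℝ) (n : ℕ) {ρ : ℝ} (hρ : 0 < ρ) :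
    ρ ^ n * exp (-a * ρ ^ 2) * ∫ η in Set.Ioi (ρ * b), exp (-η ^ 2) =
      ∫ t in Set.Ioi b, ρ ^ (n + 1) * exp (-(a + t ^ 2) * ρ ^ 2) := by
  rw [← integral_comp_mul_left_Ioi' (fun η => exp (-η ^ 2)) b hρ, smul_eq_mul, ← mul_assoc,
    ← integral_const_mul]
  congr with t
  rw [show -(a + t ^ 2) * ρ ^ 2 = -a * ρ ^ 2 + -(ρ * t) ^ 2 by ring, exp_add]
  ring

lemma integrable_prod_pow_odd_mul_exp_neg_mul_sq {a : ℝ} (ha : 0 < a) (b : ℝ) (k : ℕ) :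
    Integrable (fun p : ℝ × ℝ => p.1 ^ (2 * k + 1) * exp (-(a + p.2 ^ 2) * p.1 ^ 2))
      ((volume.restrict (Set.Ioi 0)).prod (volume.restrict (Set.Ioi b))) := by
  have hpos (t : ℝ) : 0 < a + t ^ 2 := by positivity
  rw [integrable_prod_iff' (by fun_prop)]
  refine ⟨.of_forall fun t => integrableOn_pow_mul_exp_neg_mul_sq (hpos t) _, ?_⟩
  refine ((integrable_inv_add_sq_pow_succ ha k).const_mul (k ! / 2)).integrableOn.congr
    (.of_forall fun t => ?_)
  dsimp only
  rw [← integral_pow_odd_mul_exp_neg_mul_sq (hpos t)]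
  refine setIntegral_congr_fun measurableSet_Ioi fun ρ (hρ : 0 < ρ) => ?_
  exact (norm_of_nonneg (by positivity)).symm

lemma integral_pow_even_mul_exp_mul_integral_Ioi_exp_neg_sq {a : ℝ} (ha : 0 < a) (b : ℝ) (k : ℕ) :
    ∫ ρ in Set.Ioi (0 : ℝ),
        ρ ^ (2 * k) * exp (-a * ρ ^ 2) * ∫ η in Set.Ioi (ρ * b), exp (-η ^ 2) =
      k ! / 2 * ∫ t in Set.Ioi b, ((a + t ^ 2) ^ (k + 1))⁻¹ := by
  have hpos (t : ℝ) : 0 < a + t ^ 2 := by positivity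
  calc
    _ = ∫ ρ in Set.Ioi (0 : ℝ), ∫ t in Set.Ioi b,
          ρ ^ (2 * k + 1) * exp (-(a + t ^ 2) * ρ ^ 2) :=
      setIntegral_congr_fun measurableSet_Ioi fun _ hρ =>
        pow_mul_exp_mul_integral_Ioi_exp_neg_sq a b (2 * k) hρ
    _ = ∫ t in Set.Ioi b, ∫ ρ in Set.Ioi (0 : ℝ),
          ρ ^ (2 * k + 1) * exp (-(a + t ^ 2) * ρ ^ 2) :=
      integral_integral_swap (integrable_prod_pow_odd_mul_exp_neg_mul_sq ha b k)
    _ = ∫ t in Set.Ioi b, k ! / 2 * ((a + t ^ 2) ^ (k + 1))⁻¹ := by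
      simp only [integral_pow_odd_mul_exp_neg_mul_sq (hpos _)]
    _ = k ! / 2 * ∫ t in Set.Ioi b, ((a + t ^ 2) ^ (k + 1))⁻¹ := integral_const_mul _ _

lemma integral_sq_mul_exp_mul_integral_Ioi_exp_neg_sq {s : ℝ} (hs : 0 < s) (b : ℝ) :
    ∫ ρ in Set.Ioi (0 : ℝ),
        ρ ^ 2 * exp (-s ^ 2 * ρ ^ 2) * ∫ η in Set.Ioi (ρ * b), exp (-η ^ 2) =
      π / (8 * s ^ 3) - b / (4 * s ^ 2 * (s ^ 2 + b ^ 2)) - arctan (b / s) / (4 * s ^ 3) := by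
  have reduction := integral_pow_even_mul_exp_mul_integral_Ioi_exp_neg_sq (sq_pos_of_pos hs) b 1
  rw [mul_one, Nat.factorial_one, Nat.cast_one, one_add_one_eq_two,
    integral_Ioi_inv_add_sq_sq hs] at reduction
  rw [reduction, div_mul_eq_div_div_swap b]
  ring

end GaussianTail

theorem integral_sq_exp_mul_erfc_closed_form (a : ℝ) (ha : 0 < a) :
    (∫ ρ in Set.Ioi (0:ℝ),
        ρ ^ 2 * Real.exp (-a * ρ ^ 2) * ∫ η in Set.Ioi ρ, Real.exp (-η ^ 2))
      = Real.pi / (8 * a ^ ((3:ℝ)/2)) - 1 / (4 * a * (a + 1))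
          - Real.arctan (a ^ (-(1:ℝ)/2)) / (4 * a ^ ((3:ℝ)/2)) := by
  have h_three_halves : a ^ ((3:ℝ)/2) = √a ^ 3 := by
    rw [rpow_div_two_eq_sqrt _ ha.le, rpow_ofNat]
  have h_neg_half : a ^ (-(1:ℝ)/2) = 1 / √a := by
    rw [rpow_div_two_eq_sqrt _ ha.le, rpow_neg_one, one_div]
  have closed_form := integral_sq_mul_exp_mul_integral_Ioi_exp_neg_sq (sqrt_pos.2 ha) 1
  simp only [mul_one, one_pow, sq_sqrt ha.le] at closed_form
  rw [h_three_halves, h_neg_half, closed_form]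
end

section
/- Let k be a positive integer and define F_k(t) = 4π/3 + 4π (2/√π)^k ∫₁^∞ r^{2−k} (∫_{(r−1)/(2√t)}^∞ e^{−η²} dη)^k dr for t > 0. Then as t → 0⁺, F_k(t) = 4π/3 + 8π (2/√π)^k A_k t^{1/2} + 16π (2/√π)^k (2 − k) B_k t + O(t^{3/2}), where A_k = ∫₀^∞ (∫_ρ^∞ e^{−η²} dη)^k dρ and B_k = ∫₀^∞ ρ (∫_ρ^∞ e^{−η²} dη)^k dρ. In particular the coefficient of t vanishes when k = 2, and for k = 1 the expansion reads F_1(t) = 4π/3 + 8√π t^{1/2} + 4π t + O(t^{3/2}). -/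
open MeasureTheory Filter Topology Real

/-- Expected volume `Q_{k,3}(t)` of the intersection of `k` independent Wiener sausages
generated by the closed unit ball in `ℝ³`. -/
noncomputable def wienerSausageBallVolume (k : ℕ) (t : ℝ) : ℝ :=
  4 * Real.pi / 3 +
    4 * Real.pi * (2 / Real.sqrt Real.pi) ^ k *
      ∫ r in Set.Ioi (1:ℝ),
        r ^ ((2:ℝ) - (k:ℝ)) *
          (∫ η in Set.Ioi ((r - 1) / (2 * Real.sqrt t)), Real.exp (-η ^ 2)) ^ k

/-- `A_k = ∫₀^∞ (∫_ρ^∞ e^{-η²} dη)^k dρ`. -/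
noncomputable def gaussianTailMomentZero (k : ℕ) : ℝ :=
  ∫ ρ in Set.Ioi (0:ℝ), (∫ η in Set.Ioi ρ, Real.exp (-η ^ 2)) ^ k

/-- `B_k = ∫₀^∞ ρ (∫_ρ^∞ e^{-η²} dη)^k dρ`. -/
noncomputable def gaussianTailMomentOne (k : ℕ) : ℝ :=
  ∫ ρ in Set.Ioi (0:ℝ), ρ * (∫ η in Set.Ioi ρ, Real.exp (-η ^ 2)) ^ k

/-!
Substituting `r = 1 + sρ` with `s = 2√t` turns the radial integral into
`s ∫₀^∞ (1 + sρ)^{2-k} T(ρ)^k dρ`, where `T` is the Gaussian tail. Since `T^k` has moments of all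
orders, Taylor's expansion of `(1 + x)^{2-k}` at `x = 0` may be integrated against it term by term.
For `k = 1` integration by parts evaluates the moments of `T` as values of the Gamma function.
-/

theorem iteratedDeriv_rpow_const (p x : ℝ) (n : ℕ) :
    iteratedDeriv n (fun y : ℝ => y ^ p) x = (descPochhammer ℝ n).eval p * x ^ (p - n) := by
  rw [iteratedDeriv_eq_iterate, iter_deriv_rpow_const]

theorem abs_one_add_rpow_sub_sum_le {p x : ℝ} {n : ℕ} (hp : p ≤ n + 1) (hx : 0 < x) :
    |(1 + x) ^ p - ∑ j ∈ Finset.range (n + 1), (descPochhammer ℝ j).eval p / j.factorial * x ^ j|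
      ≤ |(descPochhammer ℝ (n + 1)).eval p| / (n + 1).factorial * x ^ (n + 1) := by
  have hlt : 1 < 1 + x := by linarith
  have hsmooth (m : ℕ∞) {y : ℝ} (hy : 1 ≤ y) : ContDiffAt ℝ m (fun y : ℝ => y ^ p) y :=
    contDiffAt_rpow_const_of_ne (by linarith)
  obtain ⟨y, hy, hremainder⟩ :=
    taylor_mean_remainder_lagrange_iteratedDeriv (f := fun y => y ^ p) (n := n) hlt.ne
      (fun y hy => (hsmooth (n + 1) (Set.uIcc_of_le hlt.le ▸ hy).1).contDiffWithinAt)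
  rw [Set.uIoo_of_lt hlt] at hy
  have htaylor : taylorWithinEval (fun y : ℝ => y ^ p) n (Set.uIcc 1 (1 + x)) 1 (1 + x)
      = ∑ j ∈ Finset.range (n + 1), (descPochhammer ℝ j).eval p / j.factorial * x ^ j := by
    rw [taylor_within_apply, Set.uIcc_of_le hlt.le]
    refine Finset.sum_congr rfl fun j _ => ?_
    rw [iteratedDerivWithin_eq_iteratedDeriv (uniqueDiffOn_Icc hlt) (hsmooth j le_rfl)
      (Set.left_mem_Icc.2 hlt.le), iteratedDeriv_rpow_const, one_rpow, add_sub_cancel_left,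
      smul_eq_mul]
    ring
  have hrpow_le : y ^ (p - (n + 1 : ℕ)) ≤ 1 :=
    rpow_le_one_of_one_le_of_nonpos hy.1.le (by push_cast; linarith)
  have hrpow_nonneg : 0 ≤ y ^ (p - (n + 1 : ℕ)) := rpow_nonneg (by linarith [hy.1]) _
  rw [← htaylor, hremainder, iteratedDeriv_rpow_const, add_sub_cancel_left, abs_div, abs_mul,
    abs_mul, abs_of_nonneg hrpow_nonneg, abs_of_pos (pow_pos hx _), Nat.abs_cast,
    div_mul_eq_mul_div]
  gcongr
  exact mul_le_of_le_one_right (abs_nonneg _) hrpow_le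

theorem integral_Ioi_eq_smul_integral_Ioi_zero {E : Type*} [NormedAddCommGroup E]
    [NormedSpace ℝ E] (f : ℝ → E) (a : ℝ) {s : ℝ} (hs : 0 < s) :
    ∫ r in Set.Ioi a, f r = s • ∫ ρ in Set.Ioi (0 : ℝ), f (a + s * ρ) := by
  have translate := (measurePreserving_add_left volume a).setIntegral_preimage_emb
    (measurableEmbedding_addLeft a) f (Set.Ioi a)
  rw [Set.preimage_const_add_Ioi, sub_self] at translate
  rw [← translate, integral_comp_mul_left_Ioi (fun y => f (a + y)) 0 hs, mul_zero,
    smul_inv_smul₀ hs.ne']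

theorem integral_comp_mul_sub_sum_isBigO {φ f : ℝ → ℝ} {a : ℕ → ℝ} {n : ℕ} {C : ℝ}
    (hφ_meas : Measurable φ)
    (hφ : ∀ x, 0 < x → |φ x - ∑ j ∈ Finset.range n, a j * x ^ j| ≤ C * x ^ n)
    (hf : ∀ j ≤ n, IntegrableOn (fun ρ => ρ ^ j * f ρ) (Set.Ioi 0)) :
    (fun s => (∫ ρ in Set.Ioi (0 : ℝ), φ (s * ρ) * f ρ)
        - ∑ j ∈ Finset.range n, a j * s ^ j * ∫ ρ in Set.Ioi (0 : ℝ), ρ ^ j * f ρ)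
      =O[𝓝[>] 0] fun s => s ^ n := by
  refine .of_bound (C * ∫ ρ in Set.Ioi (0 : ℝ), ‖ρ ^ n * f ρ‖) ?_
  filter_upwards [self_mem_nhdsWithin] with s (hs : 0 < s)
  set P : ℝ → ℝ := fun ρ => ∑ j ∈ Finset.range n, a j * s ^ j * (ρ ^ j * f ρ)
  have hterm_int : ∀ j ∈ Finset.range n,
      IntegrableOn (fun ρ => a j * s ^ j * (ρ ^ j * f ρ)) (Set.Ioi 0) :=
    fun j hj => (hf j (Finset.mem_range.1 hj).le).const_mul _
  have hP_int : IntegrableOn P (Set.Ioi 0) := integrable_finsetSum _ hterm_int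
  have hbound : ∀ᵐ ρ ∂volume.restrict (Set.Ioi 0),
      ‖φ (s * ρ) * f ρ - P ρ‖ ≤ C * s ^ n * ‖ρ ^ n * f ρ‖ := by
    filter_upwards [ae_restrict_mem measurableSet_Ioi] with ρ (hρ : 0 < ρ)
    have hfactor : φ (s * ρ) * f ρ - P ρ
        = (φ (s * ρ) - ∑ j ∈ Finset.range n, a j * (s * ρ) ^ j) * f ρ := by
      rw [sub_mul, Finset.sum_mul]
      congr! 2 with j
      ring
    rw [hfactor, norm_mul, norm_mul, norm_of_nonneg (pow_nonneg hρ.le n), ← mul_assoc,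
      mul_assoc C, ← mul_pow]
    gcongr
    exact hφ _ (mul_pos hs hρ)
  have hbound_int := (hf n le_rfl).norm.const_mul (C * s ^ n)
  have hφf_int : IntegrableOn (fun ρ => φ (s * ρ) * f ρ) (Set.Ioi 0) := by
    have hf_int : IntegrableOn f (Set.Ioi 0) := by simpa using hf 0 n.zero_le
    refine integrable_of_norm_sub_le ?_ hP_int hbound_int
      (by simpa only [norm_sub_rev] using hbound)
    exact (hφ_meas.comp (measurable_const_mul s)).aestronglyMeasurable.mul
      hf_int.aestronglyMeasurable
  calc _ = ‖∫ ρ in Set.Ioi (0 : ℝ), (φ (s * ρ) * f ρ - P ρ)‖ := by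
        rw [integral_sub hφf_int hP_int, integral_finsetSum _ hterm_int]
        simp only [integral_const_mul]
    _ ≤ ∫ ρ in Set.Ioi (0 : ℝ), C * s ^ n * ‖ρ ^ n * f ρ‖ :=
        norm_integral_le_of_norm_le hbound_int hbound
    _ = _ := by
        rw [integral_const_mul, norm_of_nonneg (pow_nonneg hs.le n), mul_right_comm]

theorem integral_Ioi_one_rpow_mul_comp_div_sub_sum_isBigO {p : ℝ} {n : ℕ} (hp : p ≤ n + 1)
    {f : ℝ → ℝ} (hf : ∀ j ≤ n + 1, IntegrableOn (fun ρ => ρ ^ j * f ρ) (Set.Ioi 0)) :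
    (fun s => (∫ r in Set.Ioi (1 : ℝ), r ^ p * f ((r - 1) / s))
        - s * ∑ j ∈ Finset.range (n + 1), (descPochhammer ℝ j).eval p / j.factorial * s ^ j *
            ∫ ρ in Set.Ioi (0 : ℝ), ρ ^ j * f ρ)
      =O[𝓝[>] 0] fun s => s ^ (n + 2) := by
  have hexpansion := (Asymptotics.isBigO_refl (fun s : ℝ => s) (𝓝[>] 0)).mul
    (integral_comp_mul_sub_sum_isBigO (φ := fun x => (1 + x) ^ p) (by fun_prop)
      (fun _ => abs_one_add_rpow_sub_sum_le hp) hf)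
  refine hexpansion.congr' ?_ (.of_forall fun s => (pow_succ' s (n + 1)).symm)
  filter_upwards [self_mem_nhdsWithin] with s (hs : 0 < s)
  rw [integral_Ioi_eq_smul_integral_Ioi_zero _ 1 hs, smul_eq_mul, mul_sub]
  simp only [add_sub_cancel_left, mul_div_cancel_left₀ _ hs.ne']

theorem hasDerivAt_integral_Ioi {E : Type*} [NormedAddCommGroup E] [NormedSpace ℝ E]
    [CompleteSpace E] {f : ℝ → E} (hf : Continuous f) (hf_int : Integrable f) (x : ℝ) :
    HasDerivAt (fun y => ∫ η in Set.Ioi y, f η) (-f x) x := by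
  have hsplit : (fun y => ∫ η in Set.Ioi y, f η)
      = fun y => (∫ η in Set.Ioi x, f η) - ∫ η in x..y, f η := by
    funext y
    rw [← intervalIntegral.integral_Ioi_sub_Ioi' hf_int.integrableOn hf_int.integrableOn,
      sub_sub_cancel]
  rw [hsplit]
  exact (hf.integral_hasStrictDerivAt x x).hasDerivAt.const_sub _

/-- The Gaussian tail `∫_ρ^∞ e^{-η²} dη`, that is `(√π / 2) erfc ρ`, whose powers carry the
moments in the expansion. -/
noncomputable def gaussianTail (ρ : ℝ) : ℝ := ∫ η in Set.Ioi ρ, exp (-η ^ 2)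

theorem integrable_exp_neg_sq : Integrable fun η : ℝ => exp (-η ^ 2) := by
  simpa using integrable_exp_neg_mul_sq one_pos

theorem exp_neg_sq_le_exp_one_mul_exp_neg (η : ℝ) : exp (-η ^ 2) ≤ exp 1 * exp (-η) := by
  rw [← exp_add]
  exact exp_le_exp.2 (by nlinarith [sq_nonneg (η - 1)])

theorem hasDerivAt_gaussianTail (ρ : ℝ) : HasDerivAt gaussianTail (-exp (-ρ ^ 2)) ρ :=
  hasDerivAt_integral_Ioi (by fun_prop) integrable_exp_neg_sq ρ

theorem continuous_gaussianTail : Continuous gaussianTail :=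
  continuous_iff_continuousAt.2 fun ρ => (hasDerivAt_gaussianTail ρ).continuousAt

theorem gaussianTail_isBigO_exp_neg : gaussianTail =O[atTop] fun ρ => exp (-ρ) := by
  refine .of_bound (exp 1) (.of_forall fun ρ => ?_)
  calc ‖gaussianTail ρ‖ ≤ ∫ η in Set.Ioi ρ, exp 1 * exp (-η) :=
        norm_integral_le_of_norm_le ((integrableOn_exp_neg_Ioi ρ).const_mul _)
          (.of_forall fun η => by
            rw [norm_of_nonneg (exp_pos _).le]
            exact exp_neg_sq_le_exp_one_mul_exp_neg η)
    _ = exp 1 * ‖exp (-ρ)‖ := by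
        rw [integral_const_mul, integral_exp_neg_Ioi, norm_of_nonneg (exp_pos _).le]

theorem pow_mul_gaussianTail_pow_isBigO (n : ℕ) {k : ℕ} (hk : k ≠ 0) :
    (fun ρ => ρ ^ n * gaussianTail ρ ^ k) =O[atTop] fun ρ => exp (-(1 / 2) * ρ) := by
  have hpow : (fun ρ : ℝ => exp (-ρ) ^ k) =O[atTop] fun ρ => exp (-ρ) := by
    refine .of_bound 1 ?_
    filter_upwards [eventually_ge_atTop 0] with ρ hρ
    rw [norm_pow, one_mul, norm_of_nonneg (exp_pos _).le]
    exact pow_le_of_le_one (exp_pos _).le (exp_le_one_iff.2 (neg_nonpos.2 hρ)) hk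
  refine ((isLittleO_pow_exp_pos_mul_atTop n one_half_pos).isBigO.mul
    ((gaussianTail_isBigO_exp_neg.pow k).trans hpow)).congr_right fun ρ => ?_
  rw [← exp_add]
  ring_nf

theorem integrableOn_pow_mul_gaussianTail_pow (n : ℕ) {k : ℕ} (hk : k ≠ 0) :
    IntegrableOn (fun ρ => ρ ^ n * gaussianTail ρ ^ k) (Set.Ioi 0) :=
  integrable_of_isBigO_exp_neg one_half_pos
    (by have := continuous_gaussianTail; fun_prop) (pow_mul_gaussianTail_pow_isBigO n hk)

theorem tendsto_pow_mul_gaussianTail (n : ℕ) :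
    Tendsto (fun ρ => ρ ^ n * gaussianTail ρ) atTop (𝓝 0) := by
  have hdecay : Tendsto (fun ρ : ℝ => exp (-(1 / 2) * ρ)) atTop (𝓝 0) :=
    tendsto_exp_atBot.comp (tendsto_id.const_mul_atTop_of_neg (by norm_num))
  simpa only [pow_one] using (pow_mul_gaussianTail_pow_isBigO n one_ne_zero).trans_tendsto hdecay

theorem integrableOn_pow_mul_exp_neg_sq (n : ℕ) :
    IntegrableOn (fun x : ℝ => x ^ n * exp (-x ^ 2)) (Set.Ioi 0) := by
  simpa only [rpow_natCast, rpow_ofNat] using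
    integrableOn_rpow_mul_exp_neg_rpow (neg_one_lt_zero.trans_le n.cast_nonneg) two_pos

theorem integral_pow_mul_exp_neg_sq (n : ℕ) :
    ∫ x in Set.Ioi (0 : ℝ), x ^ n * exp (-x ^ 2) = Gamma ((n + 1) / 2) / 2 := by
  simpa only [rpow_natCast, rpow_ofNat, one_div_mul_eq_div] using
    integral_rpow_mul_exp_neg_rpow two_pos (neg_one_lt_zero.trans_le n.cast_nonneg)

theorem integral_pow_mul_gaussianTail (n : ℕ) :
    ∫ ρ in Set.Ioi (0 : ℝ), ρ ^ n * gaussianTail ρ = Gamma (n / 2 + 1) / (2 * (n + 1)) := by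
  have hn : (n + 1 : ℝ) ≠ 0 := by positivity
  have hderiv (ρ : ℝ) : HasDerivAt (fun x : ℝ => x ^ (n + 1) / (n + 1)) (ρ ^ n) ρ := by
    simpa [hn] using (hasDerivAt_pow (n + 1) ρ).div_const (n + 1 : ℝ)
  have hint : IntegrableOn (gaussianTail * fun ρ : ℝ => ρ ^ n) (Set.Ioi 0) := by
    refine (integrableOn_pow_mul_gaussianTail_pow n one_ne_zero).congr_fun (fun ρ _ => ?_)
      measurableSet_Ioi
    simp only [Pi.mul_apply, pow_one, mul_comm]
  have hint' : IntegrableOn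
      ((fun ρ => -exp (-ρ ^ 2)) * fun ρ : ℝ => ρ ^ (n + 1) / (n + 1)) (Set.Ioi 0) := by
    refine IntegrableOn.congr_fun ((integrableOn_pow_mul_exp_neg_sq (n + 1)).const_mul
      (-(n + 1 : ℝ)⁻¹)) (fun ρ _ => ?_) measurableSet_Ioi
    simp only [Pi.mul_apply]
    ring
  have hzero : Tendsto (gaussianTail * fun ρ : ℝ => ρ ^ (n + 1) / (n + 1)) (𝓝[>] 0) (𝓝 0) := by
    have hcont : Continuous (gaussianTail * fun ρ : ℝ => ρ ^ (n + 1) / (n + 1)) :=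
      continuous_gaussianTail.mul (by fun_prop)
    simpa using (hcont.tendsto 0).mono_left nhdsWithin_le_nhds
  have htop : Tendsto (gaussianTail * fun ρ : ℝ => ρ ^ (n + 1) / (n + 1)) atTop (𝓝 0) := by
    simpa only [zero_div] using ((tendsto_pow_mul_gaussianTail (n + 1)).div_const
      (n + 1 : ℝ)).congr fun ρ => (by simp only [Pi.mul_apply]; ring)
  calc ∫ ρ in Set.Ioi (0 : ℝ), ρ ^ n * gaussianTail ρ
      = ∫ ρ in Set.Ioi (0 : ℝ), gaussianTail ρ * ρ ^ n := by simp only [mul_comm]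
    _ = -∫ ρ in Set.Ioi (0 : ℝ), -exp (-ρ ^ 2) * (ρ ^ (n + 1) / (n + 1)) := by
        rw [integral_Ioi_mul_deriv_eq_deriv_mul (fun ρ _ => hasDerivAt_gaussianTail ρ)
          (fun ρ _ => hderiv ρ) hint hint' hzero htop, sub_self, zero_sub]
    _ = (n + 1 : ℝ)⁻¹ * ∫ ρ in Set.Ioi (0 : ℝ), ρ ^ (n + 1) * exp (-ρ ^ 2) := by
        rw [← integral_neg, ← integral_const_mul]
        congr! 2
        ring
    _ = Gamma (n / 2 + 1) / (2 * (n + 1)) := by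
        rw [integral_pow_mul_exp_neg_sq]
        push_cast
        field_simp
        ring_nf

theorem gaussianTailMomentZero_one : gaussianTailMomentZero 1 = 1 / 2 := by
  simpa [gaussianTailMomentZero, gaussianTail] using integral_pow_mul_gaussianTail 0

theorem gaussianTailMomentOne_one : gaussianTailMomentOne 1 = √π / 8 := by
  have hGamma : Gamma (1 / 2 + 1) = √π / 2 := by
    rw [Gamma_add_one one_half_pos.ne', Gamma_one_half_eq]
    ring
  have hmoment := integral_pow_mul_gaussianTail 1
  simp only [pow_one, Nat.cast_one, hGamma] at hmoment
  simp only [gaussianTailMomentOne, pow_one]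
  exact hmoment.trans (by ring)

theorem tendsto_const_mul_sqrt_nhdsGT_zero {c : ℝ} (hc : 0 < c) :
    Tendsto (fun t => c * √t) (𝓝[>] 0) (𝓝[>] 0) := by
  refine tendsto_nhdsWithin_iff.2 ⟨?_, ?_⟩
  · have hcont : Continuous fun t => c * √t := by fun_prop
    simpa using (hcont.tendsto 0).mono_left nhdsWithin_le_nhds
  · filter_upwards [self_mem_nhdsWithin] with t (ht : 0 < t)
    exact mul_pos hc (sqrt_pos.2 ht)

theorem wienerSausageBallVolume_sub_isBigO {k : ℕ} (hk : k ≠ 0) :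
    (fun t => wienerSausageBallVolume k t -
        (4 * π / 3 + 8 * π * (2 / √π) ^ k * gaussianTailMomentZero k * t ^ ((1 : ℝ) / 2)
          + 16 * π * (2 / √π) ^ k * (2 - k) * gaussianTailMomentOne k * t))
      =O[𝓝[>] 0] fun t => t ^ ((3 : ℝ) / 2) := by
  have hradial : (fun t => (∫ r in Set.Ioi (1 : ℝ),
        r ^ (2 - k : ℝ) * gaussianTail ((r - 1) / (2 * √t)) ^ k)
        - 2 * √t * (gaussianTailMomentZero k + (2 - k) * (2 * √t) * gaussianTailMomentOne k))
      =O[𝓝[>] 0] fun t => (2 * √t) ^ 3 := by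
    simpa [Finset.sum_range_succ, Function.comp_def, descPochhammer_succ_right,
      gaussianTailMomentZero, gaussianTailMomentOne, gaussianTail] using
      (integral_Ioi_one_rpow_mul_comp_div_sub_sum_isBigO (p := 2 - k) (n := 1)
        (by norm_num) fun j _ => integrableOn_pow_mul_gaussianTail_pow j hk).comp_tendsto
          (tendsto_const_mul_sqrt_nhdsGT_zero two_pos)
  have hcube : ∀ᶠ t in 𝓝[>] (0 : ℝ), (2 * √t) ^ 3 = 8 * t ^ ((3 : ℝ) / 2) := by
    filter_upwards [self_mem_nhdsWithin] with t (ht : 0 < t)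
    rw [mul_pow, rpow_div_two_eq_sqrt 3 ht.le, rpow_ofNat]
    norm_num
  refine ((hradial.const_mul_left (4 * π * (2 / √π) ^ k)).congr' ?_ hcube).trans
    (Asymptotics.isBigO_const_mul_self 8 _ _)
  filter_upwards [self_mem_nhdsWithin] with t (ht : 0 < t)
  have hvolume : wienerSausageBallVolume k t = 4 * π / 3 + 4 * π * (2 / √π) ^ k *
      ∫ r in Set.Ioi (1 : ℝ), r ^ (2 - k : ℝ) * gaussianTail ((r - 1) / (2 * √t)) ^ k := rfl
  rw [hvolume, ← sqrt_eq_rpow]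
  linear_combination
    -16 * π * (2 / √π) ^ k * (2 - k) * gaussianTailMomentOne k * sq_sqrt ht.le

theorem wienerSausageBall_small_time_expansion :
    (∀ k : ℕ, 1 ≤ k →
      (fun t : ℝ =>
          wienerSausageBallVolume k t -
            (4 * Real.pi / 3
              + 8 * Real.pi * (2 / Real.sqrt Real.pi) ^ k *
                  gaussianTailMomentZero k * t ^ ((1:ℝ)/2)
              + 16 * Real.pi * (2 / Real.sqrt Real.pi) ^ k * ((2:ℝ) - (k:ℝ)) *
                  gaussianTailMomentOne k * t))
        =O[𝓝[>] (0:ℝ)] fun t => t ^ ((3:ℝ)/2)) ∧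
    (∀ t : ℝ,
      16 * Real.pi * (2 / Real.sqrt Real.pi) ^ 2 * ((2:ℝ) - (2:ℕ)) *
          gaussianTailMomentOne 2 * t = 0) ∧
    ((fun t : ℝ =>
        wienerSausageBallVolume 1 t -
          (4 * Real.pi / 3 + 8 * Real.sqrt Real.pi * t ^ ((1:ℝ)/2)
            + 4 * Real.pi * t))
      =O[𝓝[>] (0:ℝ)] fun t => t ^ ((3:ℝ)/2)) := by
  refine ⟨fun k hk => wienerSausageBallVolume_sub_isBigO (Nat.one_le_iff_ne_zero.1 hk),
    fun t => by norm_num, (wienerSausageBallVolume_sub_isBigO one_ne_zero).congr_left fun t => ?_⟩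
  have hcoeff_sqrt : 8 * π * (2 / √π) ^ 1 * gaussianTailMomentZero 1 = 8 * √π := by
    rw [gaussianTailMomentZero_one]
    field_simp
    exact (sq_sqrt pi_pos.le).symm
  have hcoeff_linear :
      16 * π * (2 / √π) ^ 1 * (2 - (1 : ℕ)) * gaussianTailMomentOne 1 = 4 * π := by
    rw [gaussianTailMomentOne_one]
    field_simp
    norm_num
  rw [hcoeff_sqrt, hcoeff_linear]
end
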